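/- Let E be a real normed vector space and η : E → ℝ a continuous linear functional. Define the Weyl function W(η) : E → ℂ by W(η)(ψ) = exp(i·η(ψ)). Then W(η) is infinitely Fréchet differentiable (ContDiff of every order), and for every n ∈ ℕ and every ψ ∈ E its n-th iterated Fréchet derivative at ψ is the continuous symmetric n-multilinear map (v₁, …, vₙ) ↦ iⁿ · η(v₁)⋯η(vₙ) · exp(i·η(ψ)). -/

import Mathlib

/-!
The exponential of a commutative Banach algebra has Fréchet derivative `h ↦ h * exp x` at `x`, so
each differentiation contributes one factor given by the direction. The Weyl function is the
exponential of `ℂ` precomposed with the continuous real-linear map `ψ ↦ i η(ψ)`, and precomposition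
with a linear map only substitutes it in the directions of the iterated derivative.
-/

section Exponential

variable {𝕜 A : Type*} [RCLike 𝕜] [NormedCommRing A] [NormedAlgebra 𝕜 A] [CompleteSpace A]

theorem contDiff_normedSpace_exp {n : WithTop ℕ∞} :
    ContDiff 𝕜 n (NormedSpace.exp : A → A) :=
  AnalyticOnNhd.contDiff fun x _ => NormedSpace.exp_analytic x

theorem iteratedFDeriv_normedSpace_exp_apply (n : ℕ) (x : A) (v : Fin n → A) :
    iteratedFDeriv 𝕜 n NormedSpace.exp x v = (∏ i, v i) * NormedSpace.exp x := by
  induction n generalizing x with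
  | zero => simp
  | succ n ih =>
    have hdiff : Differentiable 𝕜 (iteratedFDeriv 𝕜 n (NormedSpace.exp : A → A)) :=
      contDiff_normedSpace_exp.differentiable_iteratedFDeriv (WithTop.coe_lt_top _)
    have hderiv : HasFDerivAt (fun y : A => (∏ i : Fin n, v i.succ) * NormedSpace.exp y)
        ((∏ i : Fin n, v i.succ) • NormedSpace.exp x • (1 : A →L[𝕜] A)) x :=
      hasFDerivAt_exp.const_mul _
    calc iteratedFDeriv 𝕜 (n + 1) NormedSpace.exp x v
        = fderiv 𝕜 (fun y => iteratedFDeriv 𝕜 n NormedSpace.exp y (Fin.tail v)) x (v 0) :=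
          (hdiff x).iteratedFDeriv_succ_apply_left'
      _ = fderiv 𝕜 (fun y => (∏ i : Fin n, v i.succ) * NormedSpace.exp y) x (v 0) := by
          simp only [ih, Fin.tail]
      _ = (∏ i : Fin n, v i.succ) * (NormedSpace.exp x * v 0) := by
          rw [hderiv.fderiv]; rfl
      _ = (∏ i, v i) * NormedSpace.exp x := by
          rw [Fin.prod_univ_succ]; ring

end Exponential

theorem stmt9_general {𝕜 A E : Type*} [RCLike 𝕜] [NormedCommRing A] [NormedAlgebra 𝕜 A]
    [CompleteSpace A] [NormedAddCommGroup E] [NormedSpace 𝕜 E] (c : A) (η : E →L[𝕜] A)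
    (W : E → A) (hW : ∀ ψ, W ψ = NormedSpace.exp (c * η ψ)) :
    (∀ n : WithTop ℕ∞, ContDiff 𝕜 n W) ∧
    ∀ (n : ℕ) (ψ : E) (v : Fin n → E),
      iteratedFDeriv 𝕜 n W ψ v = c ^ n * (∏ i, η (v i)) * NormedSpace.exp (c * η ψ) := by
  obtain rfl : W = NormedSpace.exp ∘ (c • η) := funext hW
  refine ⟨fun n => contDiff_normedSpace_exp.comp (c • η).contDiff, fun n ψ v => ?_⟩
  rw [(c • η).iteratedFDeriv_comp_right contDiff_normedSpace_exp ψ le_rfl,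
    ContinuousMultilinearMap.compContinuousLinearMap_apply, iteratedFDeriv_normedSpace_exp_apply]
  simp only [smul_apply, smul_eq_mul, Finset.prod_mul_distrib, Finset.prod_const,
    Finset.card_univ, Fintype.card_fin]

/-- The Weyl function `W(η)(ψ) = exp(i η(ψ))` is smooth of every order, and
its `n`-th iterated Fréchet derivative at `ψ` is the continuous symmetric `n`-multilinear
map `(v₁,…,vₙ) ↦ iⁿ η(v₁)⋯η(vₙ) exp(i η(ψ))`. -/
theorem stmt9 {E : Type*} [NormedAddCommGroup E] [NormedSpace ℝ E]
    (η : E →L[ℝ] ℝ) (W : E → ℂ)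
    (hW : ∀ ψ, W ψ = Complex.exp (Complex.I * η ψ)) :
    (∀ n : ℕ∞, ContDiff ℝ n W) ∧
    ∀ (n : ℕ) (ψ : E) (v : Fin n → E),
      iteratedFDeriv ℝ n W ψ v =
        Complex.I ^ n * (∏ i, (η (v i) : ℂ)) * Complex.exp (Complex.I * η ψ) := by
  rw [Complex.exp_eq_exp_ℂ] at hW ⊢
  exact (stmt9_general Complex.I (Complex.ofRealCLM.comp η) W hW).imp_left fun h n => h n
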